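/- arXiv:1912.03956 — 5 statements merged into one kernel-verified Lean document; each statement's English description precedes it below -/
import Mathlib

section
/- Let φ(z) = (az + b)/(cz + d) be a linear fractional map with a, b, c, d ∈ ℂ and ad − bc ≠ 0. Then φ maps the open unit disc 𝔻 into itself if and only if |b·conj(d) − a·conj(c)| + |ad − bc| ≤ |d|² − |c|². -/
/-!
When `‖c‖ < ‖d‖`, the map `ψ z = (conj d * z + conj c) / (c * z + d)` is an automorphism of the unit
disc, and with `D = ‖d‖ ^ 2 - ‖c‖ ^ 2`
`(a * z + b) / (c * z + d) = (b * conj d - a * conj c) / D + (a * d - b * c) / D * ψ z`.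
So the image of the disc is the disc with centre `(b * conj d - a * conj c) / D` and radius
`‖a * d - b * c‖ / D`, and one compares two discs. If `‖d‖ ≤ ‖c‖`, the pole lies in the closed disc
and the map is unbounded on the open one.
-/

open Bornology Filter Metric Set Topology
open scoped ComplexConjugate Pointwise

/-- The linear fractional map `z ↦ (a * z + b) / (c * z + d)`, totalised by the value `0` at its
pole. -/
def linearFractional {K : Type*} [Field K] (a b c d z : K) : K :=
  (a * z + b) / (c * z + d)

theorem ball_subset_ball_iff_dist_add_le {E : Type*} [NormedAddCommGroup E] [NormedSpace ℝ E]
    [Nontrivial E] {x y : E} {r s : ℝ} (hr : 0 < r) :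
    ball x r ⊆ ball y s ↔ dist x y + r ≤ s := by
  refine ⟨fun hsub ↦ ?_, fun h ↦ ball_subset_ball' (by linarith)⟩
  obtain ⟨v, hv, hray⟩ : ∃ v : E, ‖v‖ = r ∧ SameRay ℝ (x - y) v := by
    rcases eq_or_ne x y with rfl | hxy
    · obtain ⟨v, hv⟩ := exists_norm_eq E hr.le
      exact ⟨v, hv, by simp⟩
    · have hpos : 0 < ‖x - y‖ := norm_pos_iff.2 (sub_ne_zero.2 hxy)
      refine ⟨(r / ‖x - y‖) • (x - y), ?_, SameRay.sameRay_nonneg_smul_right _ (by positivity)⟩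
      rw [norm_smul, Real.norm_of_nonneg (by positivity), div_mul_cancel₀ _ hpos.ne']
  have hmem : x + v ∈ closure (ball x r) := by
    rw [closure_ball x hr.ne']
    simp [hv]
  have hdist : dist (x + v) y ≤ s := closure_ball_subset_closedBall (closure_mono hsub hmem)
  rwa [dist_eq_norm, add_sub_right_comm, hray.norm_add, hv, ← dist_eq_norm] at hdist

section Pole

variable {𝕜 : Type*} [NormedField 𝕜] {a b c d z : 𝕜}

theorem mul_add_ne_zero_of_norm_lt (hcd : ‖c‖ < ‖d‖) (hz : ‖z‖ ≤ 1) : c * z + d ≠ 0 := by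
  intro hpole
  have hnorm : ‖d‖ = ‖c‖ * ‖z‖ := by
    rw [eq_neg_of_add_eq_zero_right hpole, norm_neg, norm_mul]
  nlinarith [norm_nonneg c]

theorem tendsto_linearFractional_cobounded (hdet : a * d - b * c ≠ 0) (hpole : c * z + d = 0) :
    Tendsto (linearFractional a b c d) (𝓝[≠] z) (cobounded 𝕜) := by
  have hnum : a * z + b ≠ 0 := fun hnum ↦ hdet (by linear_combination a * hpole - c * hnum)
  have hc : c ≠ 0 := by
    rintro rfl
    simp_all
  have hnum_lim : Tendsto (fun w ↦ ‖a * w + b‖) (𝓝[≠] z) (𝓝 ‖a * z + b‖) :=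
    (Continuous.tendsto (by fun_prop) z).mono_left nhdsWithin_le_nhds
  have hden_lim : Tendsto (fun w ↦ c * w + d) (𝓝[≠] z) (𝓝[≠] 0) := by
    refine tendsto_nhdsWithin_iff.2 ⟨?_, eventually_mem_nhdsWithin.mono fun w hw hw_pole ↦ hw ?_⟩
    · rw [← hpole]
      exact (Continuous.tendsto (by fun_prop) z).mono_left nhdsWithin_le_nhds
    · exact mul_left_cancel₀ hc (add_right_cancel (hw_pole.trans hpole.symm))
  have hinv_lim : Tendsto (fun w ↦ ‖(c * w + d)⁻¹‖) (𝓝[≠] z) atTop :=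
    tendsto_norm_cobounded_atTop.comp (tendsto_inv₀_nhdsNE_zero.comp hden_lim)
  rw [← tendsto_norm_atTop_iff_cobounded]
  simpa only [linearFractional, div_eq_mul_inv, norm_mul] using
    hnum_lim.pos_mul_atTop (norm_pos_iff.2 hnum) hinv_lim

end Pole

theorem mul_add_ne_zero_of_mapsTo_linearFractional {𝕜 : Type*} [NontriviallyNormedField 𝕜]
    {a b c d z : 𝕜} {s t : Set 𝕜} (hdet : a * d - b * c ≠ 0) (hs : IsOpen s) (ht : IsBounded t)
    (hmaps : MapsTo (linearFractional a b c d) s t) (hz : z ∈ closure s) : c * z + d ≠ 0 := by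
  intro hpole
  have hz_punctured : z ∈ closure (s ∩ {z}ᶜ) :=
    closure_minimal ((dense_compl_singleton z).open_subset_closure_inter hs) isClosed_closure hz
  have := mem_closure_iff_nhdsWithin_neBot.1 hz_punctured
  have hlim : Tendsto (linearFractional a b c d) (𝓝[s ∩ {z}ᶜ] z) (cobounded 𝕜) :=
    (tendsto_linearFractional_cobounded hdet hpole).mono_left
      (nhdsWithin_mono z inter_subset_right)
  have hout : ∀ᶠ w in 𝓝[s ∩ {z}ᶜ] z, linearFractional a b c d w ∈ tᶜ := hlim ht
  obtain ⟨w, hw_out, hw⟩ := (hout.and self_mem_nhdsWithin).exists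
  exact hw_out (hmaps hw.1)

section UnitDisc

variable {𝕜 : Type*} [RCLike 𝕜] {a b c d z : 𝕜}

theorem norm_lt_of_mapsTo_linearFractional (hdet : a * d - b * c ≠ 0)
    (hmaps : MapsTo (linearFractional a b c d) (ball 0 1) (ball 0 1)) : ‖c‖ < ‖d‖ := by
  by_contra! hle
  have hc : c ≠ 0 := by
    rintro rfl
    simp_all
  refine mul_add_ne_zero_of_mapsTo_linearFractional (z := -d / c) hdet isOpen_ball
    isBounded_ball hmaps ?_ (by field_simp; ring)
  rw [closure_ball _ one_ne_zero, mem_closedBall_zero_iff, norm_div, norm_neg]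
  exact div_le_one_of_le₀ hle (norm_nonneg c)

theorem norm_mul_add_sq_sub_norm_conj_mul_add_conj_sq (c d z : 𝕜) :
    ‖c * z + d‖ ^ 2 - ‖conj d * z + conj c‖ ^ 2 = (‖d‖ ^ 2 - ‖c‖ ^ 2) * (1 - ‖z‖ ^ 2) := by
  apply RCLike.ofReal_injective (K := 𝕜)
  push_cast
  simp only [← RCLike.mul_conj, map_add, map_mul, RCLike.conj_conj]
  ring

theorem mapsTo_linearFractional_conj_ball (hcd : ‖c‖ < ‖d‖) :
    MapsTo (linearFractional (conj d) (conj c) c d) (ball 0 1) (ball 0 1) := by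
  intro z hz
  rw [mem_ball_zero_iff] at hz ⊢
  have hD : 0 < ‖d‖ ^ 2 - ‖c‖ ^ 2 := sub_pos.2 (by gcongr)
  have hz_sq : 0 < 1 - ‖z‖ ^ 2 := sub_pos.2 (pow_lt_one₀ (norm_nonneg z) hz two_ne_zero)
  rw [linearFractional, norm_div,
    div_lt_one (norm_pos_iff.2 (mul_add_ne_zero_of_norm_lt hcd hz.le))]
  refine lt_of_pow_lt_pow_left₀ 2 (norm_nonneg _) (sub_pos.1 ?_)
  rw [norm_mul_add_sq_sub_norm_conj_mul_add_conj_sq]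
  exact mul_pos hD hz_sq

theorem image_linearFractional_conj_ball (hcd : ‖c‖ < ‖d‖) :
    linearFractional (conj d) (conj c) c d '' ball 0 1 = ball 0 1 := by
  refine (mapsTo_linearFractional_conj_ball hcd).image_subset.antisymm fun w hw ↦ ?_
  have hcd' : ‖-c‖ < ‖conj d‖ := by simpa using hcd
  set z : 𝕜 := linearFractional d (-conj c) (-c) (conj d) w
  have hz : z ∈ ball 0 1 := by
    simpa only [RCLike.conj_conj, map_neg] using mapsTo_linearFractional_conj_ball hcd' hw
  have hz_eq : z * (-c * w + conj d) = d * w + -conj c :=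
    div_mul_cancel₀ _ (mul_add_ne_zero_of_norm_lt hcd' (mem_ball_zero_iff.1 hw).le)
  refine ⟨z, hz, ?_⟩
  rw [linearFractional, div_eq_iff (mul_add_ne_zero_of_norm_lt hcd (mem_ball_zero_iff.1 hz).le)]
  linear_combination hz_eq

theorem linearFractional_eq_add_mul (a b : 𝕜) (hcd : ‖c‖ ≠ ‖d‖) (hz : c * z + d ≠ 0) :
    linearFractional a b c d z =
      (b * conj d - a * conj c) / ((‖d‖ ^ 2 - ‖c‖ ^ 2 : ℝ) : 𝕜) +
        (a * d - b * c) / ((‖d‖ ^ 2 - ‖c‖ ^ 2 : ℝ) : 𝕜) *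
          linearFractional (conj d) (conj c) c d z := by
  have hD : ((‖d‖ ^ 2 - ‖c‖ ^ 2 : ℝ) : 𝕜) ≠ 0 := by
    rw [RCLike.ofReal_ne_zero, sub_ne_zero]
    simpa [sq_eq_sq₀] using hcd.symm
  have hD_eq : ((‖d‖ ^ 2 - ‖c‖ ^ 2 : ℝ) : 𝕜) = d * conj d - c * conj c := by
    simp [RCLike.mul_conj]
  rw [linearFractional, linearFractional, div_mul_div_comm, div_add_div _ _ hD (mul_ne_zero hD hz),
    div_eq_div_iff hz (mul_ne_zero hD (mul_ne_zero hD hz)), hD_eq]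
  ring

theorem image_linearFractional_ball (hdet : a * d - b * c ≠ 0) (hcd : ‖c‖ < ‖d‖) :
    linearFractional a b c d '' ball 0 1 =
      ball ((b * conj d - a * conj c) / ((‖d‖ ^ 2 - ‖c‖ ^ 2 : ℝ) : 𝕜))
        (‖a * d - b * c‖ / (‖d‖ ^ 2 - ‖c‖ ^ 2)) := by
  have hD : 0 < ‖d‖ ^ 2 - ‖c‖ ^ 2 := sub_pos.2 (by gcongr)
  set D : 𝕜 := ((‖d‖ ^ 2 - ‖c‖ ^ 2 : ℝ) : 𝕜)
  have hD_ne : D ≠ 0 := RCLike.ofReal_ne_zero.2 hD.ne'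
  have hD_norm : ‖D‖ = ‖d‖ ^ 2 - ‖c‖ ^ 2 := RCLike.norm_of_nonneg hD.le
  calc linearFractional a b c d '' ball 0 1
      = (fun w ↦ (b * conj d - a * conj c) / D + (a * d - b * c) / D * w) ''
          (linearFractional (conj d) (conj c) c d '' ball 0 1) := by
        rw [image_image]
        refine image_congr fun z hz ↦ linearFractional_eq_add_mul a b hcd.ne ?_
        exact mul_add_ne_zero_of_norm_lt hcd (mem_ball_zero_iff.1 hz).le
    _ = (b * conj d - a * conj c) / D +ᵥ ((a * d - b * c) / D) • ball (0 : 𝕜) 1 := by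
        rw [image_linearFractional_conj_ball hcd, ← image_smul, ← image_vadd, image_image]
        simp only [smul_eq_mul, vadd_eq_add]
    _ = ball ((b * conj d - a * conj c) / D) (‖a * d - b * c‖ / (‖d‖ ^ 2 - ‖c‖ ^ 2)) := by
        rw [smul_unitBall (div_ne_zero hdet hD_ne), Metric.vadd_ball, vadd_eq_add, add_zero,
          norm_div, hD_norm]

theorem mapsTo_linearFractional_ball_iff (hdet : a * d - b * c ≠ 0) (hcd : ‖c‖ < ‖d‖) :
    MapsTo (linearFractional a b c d) (ball 0 1) (ball 0 1) ↔
      ‖b * conj d - a * conj c‖ + ‖a * d - b * c‖ ≤ ‖d‖ ^ 2 - ‖c‖ ^ 2 := by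
  have hD : 0 < ‖d‖ ^ 2 - ‖c‖ ^ 2 := sub_pos.2 (by gcongr)
  rw [mapsTo_iff_image_subset, image_linearFractional_ball hdet hcd,
    ball_subset_ball_iff_dist_add_le (div_pos (norm_pos_iff.2 hdet) hD), dist_zero_right, norm_div,
    RCLike.norm_of_nonneg hD.le, ← add_div, div_le_one hD]

end UnitDisc

theorem stmt_10_general {𝕜 : Type*} [RCLike 𝕜] (a b c d : 𝕜) (h_det : a * d - b * c ≠ 0) :
    (∀ z : 𝕜, ‖z‖ < 1 → ‖(a * z + b) / (c * z + d)‖ < 1) ↔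
      ‖b * conj d - a * conj c‖ + ‖a * d - b * c‖ ≤ ‖d‖ ^ 2 - ‖c‖ ^ 2 := by
  have hmaps_iff : (∀ z : 𝕜, ‖z‖ < 1 → ‖(a * z + b) / (c * z + d)‖ < 1) ↔
      MapsTo (linearFractional a b c d) (ball 0 1) (ball 0 1) := by
    simp only [MapsTo, mem_ball_zero_iff, linearFractional]
  rw [hmaps_iff]
  refine ⟨fun hmaps ↦ ?_, fun hle ↦ ?_⟩
  · have hcd : ‖c‖ < ‖d‖ := norm_lt_of_mapsTo_linearFractional h_det hmaps
    exact (mapsTo_linearFractional_ball_iff h_det hcd).1 hmaps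
  · have hD : 0 < ‖d‖ ^ 2 - ‖c‖ ^ 2 :=
      (add_pos_of_nonneg_of_pos (norm_nonneg _) (norm_pos_iff.2 h_det)).trans_le hle
    have hcd : ‖c‖ < ‖d‖ := lt_of_pow_lt_pow_left₀ 2 (norm_nonneg d) (sub_pos.1 hD)
    exact (mapsTo_linearFractional_ball_iff h_det hcd).2 hle

/-- A linear fractional map `φ(z) = (az+b)/(cz+d)` with `ad - bc ≠ 0`
maps the open unit disc into itself if and only if
`|b * conj d - a * conj c| + |ad - bc| ≤ |d|^2 - |c|^2`. -/
theorem stmt_10 (a b c d : ℂ) (h_det : a * d - b * c ≠ 0) :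
    (∀ z : ℂ, ‖z‖ < 1 → ‖(a * z + b) / (c * z + d)‖ < 1) ↔
      ‖b * (starRingEnd ℂ) d - a * (starRingEnd ℂ) c‖ + ‖a * d - b * c‖ ≤
        ‖d‖ ^ 2 - ‖c‖ ^ 2 :=
  stmt_10_general a b c d h_det
end

section
/- Let φ(z) = (az + b)/(cz + d) be a linear fractional map with ad − bc ≠ 0, and define the associated linear fractional map φ*(z) = (conj(a)·z − conj(c)) / (−conj(b)·z + conj(d)). Then φ maps the open unit disc 𝔻 into itself if and only if φ* maps 𝔻 into itself. -/
/-! The map `φ(z) = (az + b)/(cz + d)` sends the unit disc `𝔻` into itself if and only if the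
equation `w(az + b) = cz + d`, which says that `φ(z) = 1/w`, has no solution `(z, w)` in `𝔻 × 𝔻`.
Solved for `z` instead of `w`, the same equation reads `z(aw - c) = -bw + d`, so the criterion for
`φ` is also the criterion for `w ↦ (aw - c)/(-bw + d)`. Conjugating the coefficients of the latter
gives `φ*`. -/

open Set Metric
open scoped ComplexConjugate Topology

section Field

variable {𝕜 : Type*} [Field 𝕜] {a b c d z w : 𝕜}

theorem num_ne_zero_of_mul_num_eq_den (h_det : a * d - b * c ≠ 0)
    (h : w * (a * z + b) = c * z + d) : a * z + b ≠ 0 := by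
  intro hnum
  have hden : c * z + d = 0 := by rw [← h, hnum, mul_zero]
  exact h_det (by linear_combination a * hden - c * hnum)

theorem mul_num_eq_den_iff_swap :
    w * (a * z + b) = c * z + d ↔ z * (a * w - c) = -b * w + d := by
  constructor <;> intro h <;> linear_combination h

theorem exists_mul_num_eq_den_of_mem_closure [TopologicalSpace 𝕜] [IsTopologicalDivisionRing 𝕜]
    [T1Space 𝕜] {S U : Set 𝕜} (h_det : a * d - b * c ≠ 0) (hU : IsOpen U) (hz : z ∈ U)
    (hw : w ∈ closure S) (h : w * (a * z + b) = c * z + d) :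
    ∃ z' ∈ U, ∃ w' ∈ S, w' * (a * z' + b) = c * z' + d := by
  rw [mul_num_eq_den_iff_swap] at h
  have hne : a * w - c ≠ 0 := by
    rw [sub_eq_add_neg] at h ⊢
    exact num_ne_zero_of_mul_num_eq_den (by rwa [neg_mul_neg, mul_comm c]) h
  have hden : ContinuousAt (fun w' ↦ a * w' - c) w := by fun_prop
  have hsol : ContinuousAt (fun w' ↦ (-b * w' + d) / (a * w' - c)) w :=
    ContinuousAt.div (by fun_prop) hden hne
  have hsol_mem : ∀ᶠ w' in 𝓝 w, (-b * w' + d) / (a * w' - c) ∈ U :=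
    hsol.eventually_mem (hU.mem_nhds (by rwa [← h, mul_div_cancel_right₀ z hne]))
  obtain ⟨w', hw'S, hw'U, hw'ne⟩ := ((mem_closure_iff_frequently.mp hw).and_eventually
    (hsol_mem.and (hden.eventually_ne hne))).exists
  exact ⟨_, hw'U, w', hw'S, mul_num_eq_den_iff_swap.mpr (div_mul_cancel₀ _ hw'ne)⟩

end Field

theorem mul_num_ne_den_of_mapsTo_ball {𝕜 : Type*} [NontriviallyNormedField 𝕜] {a b c d : 𝕜}
    (h_det : a * d - b * c ≠ 0) (h : ∀ z : 𝕜, ‖z‖ < 1 → ‖(a * z + b) / (c * z + d)‖ < 1)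
    {z w : 𝕜} (hz : ‖z‖ < 1) (hw : ‖w‖ < 1) : w * (a * z + b) ≠ c * z + d := by
  intro hzw
  -- Division by zero gives `0`, so `h` says nothing at a pole, which corresponds to `w = 0`.
  have hw_closure : w ∈ closure (ball 0 1 ∩ {0}ᶜ) :=
    (dense_compl_singleton 0).open_subset_closure_inter isOpen_ball (mem_ball_zero_iff.mpr hw)
  obtain ⟨z', hz', w', ⟨hw', hw'0⟩, hzw'⟩ := exists_mul_num_eq_den_of_mem_closure h_det
    isOpen_ball (mem_ball_zero_iff.mpr hz) hw_closure hzw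
  rw [mem_ball_zero_iff] at hz' hw'
  have hlt : ‖w'‖⁻¹ < 1 := by
    simpa only [← hzw', div_mul_cancel_right₀ (num_ne_zero_of_mul_num_eq_den h_det hzw'),
      norm_inv] using h z' hz'
  exact hlt.not_gt ((one_lt_inv₀ (norm_pos_iff.mpr hw'0)).mpr hw')

theorem mapsTo_ball_iff_conj {𝕜 : Type*} [NormedField 𝕜] [StarRing 𝕜] [NormedStarGroup 𝕜]
    {a b c d : 𝕜} :
    (∀ z : 𝕜, ‖z‖ < 1 → ‖(a * z + b) / (c * z + d)‖ < 1) ↔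
      ∀ z : 𝕜, ‖z‖ < 1 → ‖(conj a * z + conj b) / (conj c * z + conj d)‖ < 1 := by
  rw [star_involutive.surjective.forall (p := fun z : 𝕜 ↦
    ‖z‖ < 1 → ‖(conj a * z + conj b) / (conj c * z + conj d)‖ < 1)]
  simp only [starRingEnd_apply, ← star_mul', ← star_add, ← star_div₀, norm_star]

section RCLike

variable {𝕜 : Type*} [RCLike 𝕜] {a b c d : 𝕜}

theorem norm_div_lt_one_of_mul_num_ne_den (h_det : a * d - b * c ≠ 0)
    (h : ∀ z w : 𝕜, ‖z‖ < 1 → ‖w‖ < 1 → w * (a * z + b) ≠ c * z + d) {z : 𝕜} (hz : ‖z‖ < 1) :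
    ‖(a * z + b) / (c * z + d)‖ < 1 := by
  by_contra! hge
  have hnum : a * z + b ≠ 0 := by
    intro hnum
    norm_num [hnum] at hge
  have hw : (c * z + d) / (a * z + b) ∈ closure (ball 0 1) := by
    rw [closure_ball 0 one_ne_zero, mem_closedBall_zero_iff, ← inv_div, norm_inv]
    exact inv_le_one_of_one_le₀ hge
  obtain ⟨z', hz', w', hw', hzw'⟩ := exists_mul_num_eq_den_of_mem_closure h_det isOpen_ball
    (mem_ball_zero_iff.mpr hz) hw (div_mul_cancel₀ _ hnum)
  exact h z' w' (mem_ball_zero_iff.mp hz') (mem_ball_zero_iff.mp hw') hzw'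

theorem mapsTo_ball_iff_mul_num_ne_den (h_det : a * d - b * c ≠ 0) :
    (∀ z : 𝕜, ‖z‖ < 1 → ‖(a * z + b) / (c * z + d)‖ < 1) ↔
      ∀ z w : 𝕜, ‖z‖ < 1 → ‖w‖ < 1 → w * (a * z + b) ≠ c * z + d :=
  ⟨fun h _ _ ↦ mul_num_ne_den_of_mapsTo_ball h_det h,
    fun h _ ↦ norm_div_lt_one_of_mul_num_ne_den h_det h⟩

theorem mapsTo_ball_iff_swap (h_det : a * d - b * c ≠ 0) :
    (∀ z : 𝕜, ‖z‖ < 1 → ‖(a * z + b) / (c * z + d)‖ < 1) ↔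
      ∀ w : 𝕜, ‖w‖ < 1 → ‖(a * w - c) / (-b * w + d)‖ < 1 := by
  have h_det' : a * d - -c * -b ≠ 0 := by rwa [neg_mul_neg, mul_comm c]
  have hswap := mapsTo_ball_iff_mul_num_ne_den h_det'
  simp only [← sub_eq_add_neg] at hswap
  rw [mapsTo_ball_iff_mul_num_ne_den h_det, hswap, forall_comm]
  refine forall₂_congr fun w z ↦ ?_
  rw [Ne, mul_num_eq_den_iff_swap, imp.swap]

end RCLike

theorem stmt_11_general {𝕜 : Type*} [RCLike 𝕜] (a b c d : 𝕜) (h_det : a * d - b * c ≠ 0) :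
    (∀ z : 𝕜, ‖z‖ < 1 → ‖(a * z + b) / (c * z + d)‖ < 1) ↔
      (∀ z : 𝕜, ‖z‖ < 1 → ‖(conj a * z - conj c) / (-conj b * z + conj d)‖ < 1) := by
  rw [mapsTo_ball_iff_swap h_det]
  simpa only [map_neg, ← sub_eq_add_neg] using
    mapsTo_ball_iff_conj (a := a) (b := -c) (c := -b) (d := d)

/-- For a linear fractional map `φ(z) = (az+b)/(cz+d)` with `ad - bc ≠ 0`,
with associated map `φ*(z) = (conj a · z - conj c)/(-conj b · z + conj d)`,
`φ` maps the open unit disc into itself iff `φ*` does. -/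
theorem stmt_11 (a b c d : ℂ) (h_det : a * d - b * c ≠ 0) :
    (∀ z : ℂ, ‖z‖ < 1 → ‖(a * z + b) / (c * z + d)‖ < 1) ↔
      (∀ z : ℂ, ‖z‖ < 1 →
        ‖((starRingEnd ℂ) a * z - (starRingEnd ℂ) c) /
            (-(starRingEnd ℂ) b * z + (starRingEnd ℂ) d)‖ < 1) :=
  stmt_11_general a b c d h_det
end

section
/- Let φ(z) = (az + b)/(cz + d) be a linear fractional map with ad − bc = 1 that maps the open unit disc 𝔻 into itself. Then σ(z) = (conj(a)·z − conj(c)) / (−conj(b)·z + conj(d)) also maps 𝔻 into itself. -/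
/-!
In homogeneous coordinates, that `φ` maps the closed disc into itself means
`‖a x + b y‖ ≤ ‖c x + d y‖` on the cone `‖x‖ ≤ ‖y‖`. The map `σ` is `φ⁻¹` conjugated by the
reflection `z ↦ 1 / conj z`. If `σ (conj u)` were outside the open disc for some `‖u‖ < 1`, then
`(x, y) = (d - b u, a u - c)`, which represents `φ⁻¹ (1 / u)`, would lie in the cone. But `φ` sends
it to `(δ, u δ)` with `δ = a d - b c`, which gives `‖δ‖ ≤ ‖u‖ ‖δ‖`, a contradiction.
-/

open Metric

section NormedField

variable {𝕜 : Type*} [NormedField 𝕜] {a b c d : 𝕜}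

lemma norm_mul_add_mul_le_of_forall_norm_le_one
    (h : ∀ z : 𝕜, ‖z‖ ≤ 1 → ‖a * z + b‖ ≤ ‖c * z + d‖) {x y : 𝕜} (hxy : ‖x‖ ≤ ‖y‖) :
    ‖a * x + b * y‖ ≤ ‖c * x + d * y‖ := by
  rcases eq_or_ne y 0 with rfl | hy
  · obtain rfl : x = 0 := by simpa using hxy
    simp
  · have hdiv : ‖x / y‖ ≤ 1 := by
      rw [norm_div]
      exact div_le_one_of_le₀ hxy (norm_nonneg y)
    have factor (p q : 𝕜) : p * x + q * y = (p * (x / y) + q) * y := by field_simp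
    rw [factor a b, factor c d, norm_mul, norm_mul]
    exact mul_le_mul_of_nonneg_right (h _ hdiv) (norm_nonneg y)

lemma norm_mul_sub_lt_norm_neg_mul_add (hdet : a * d - b * c ≠ 0)
    (h : ∀ z : 𝕜, ‖z‖ ≤ 1 → ‖a * z + b‖ ≤ ‖c * z + d‖) {u : 𝕜} (hu : ‖u‖ < 1) :
    ‖a * u - c‖ < ‖-b * u + d‖ := by
  by_contra! hle
  have image_le := norm_mul_add_mul_le_of_forall_norm_le_one h hle
  have num_eq : a * (-b * u + d) + b * (a * u - c) = a * d - b * c := by ring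
  have den_eq : c * (-b * u + d) + d * (a * u - c) = u * (a * d - b * c) := by ring
  rw [num_eq, den_eq, norm_mul] at image_le
  exact image_le.not_gt (mul_lt_of_lt_one_left (norm_pos_iff.mpr hdet) hu)

end NormedField

lemma dense_setOf_mul_add_ne_zero {𝕜 : Type*} [NontriviallyNormedField 𝕜] {c d : 𝕜}
    (hcd : c ≠ 0 ∨ d ≠ 0) : Dense {z : 𝕜 | c * z + d ≠ 0} := by
  refine (dense_compl_singleton (-d / c)).mono fun z hz hzero ↦ ?_
  rcases eq_or_ne c 0 with rfl | hc
  · simp_all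
  · exact hz ((eq_div_iff hc).mpr (by linear_combination hzero))

section RCLike

variable {𝕜 : Type*} [RCLike 𝕜] {a b c d : 𝕜}

-- At a pole the quotient is `0` and `hφ` says nothing; the inequality there, as on the boundary
-- circle, follows by density.
lemma norm_mul_add_le_of_norm_div_le_one (hcd : c ≠ 0 ∨ d ≠ 0)
    (hφ : ∀ z : 𝕜, ‖z‖ < 1 → ‖(a * z + b) / (c * z + d)‖ ≤ 1) {z : 𝕜} (hz : ‖z‖ ≤ 1) :
    ‖a * z + b‖ ≤ ‖c * z + d‖ := by
  have le_off_pole :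
      ball (0 : 𝕜) 1 ∩ {w | c * w + d ≠ 0} ⊆ {w | ‖a * w + b‖ ≤ ‖c * w + d‖} := by
    rintro w ⟨hw, hden⟩
    have hquot := hφ w (mem_ball_zero_iff.mp hw)
    rwa [norm_div, div_le_one (norm_pos_iff.mpr hden)] at hquot
  have le_closed : IsClosed {w : 𝕜 | ‖a * w + b‖ ≤ ‖c * w + d‖} :=
    isClosed_le (by fun_prop) (by fun_prop)
  have le_on_ball : ball (0 : 𝕜) 1 ⊆ {w | ‖a * w + b‖ ≤ ‖c * w + d‖} :=
    ((dense_setOf_mul_add_ne_zero hcd).open_subset_closure_inter isOpen_ball).trans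
      (closure_minimal le_off_pole le_closed)
  have mem_closure_ball : z ∈ closure (ball (0 : 𝕜) 1) := by
    rwa [closure_ball (0 : 𝕜) one_ne_zero, mem_closedBall_zero_iff]
  exact closure_minimal le_on_ball le_closed mem_closure_ball

theorem stmt_12_general (hdet : a * d - b * c ≠ 0)
    (hφ : ∀ z : 𝕜, ‖z‖ < 1 → ‖(a * z + b) / (c * z + d)‖ ≤ 1) {z : 𝕜} (hz : ‖z‖ < 1) :
    ‖((starRingEnd 𝕜) a * z - (starRingEnd 𝕜) c) /
        (-(starRingEnd 𝕜) b * z + (starRingEnd 𝕜) d)‖ < 1 := by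
  have hcd : c ≠ 0 ∨ d ≠ 0 := by
    by_contra! hzero
    exact hdet (by simp [hzero])
  have hlt : ‖a * starRingEnd 𝕜 z - c‖ < ‖-b * starRingEnd 𝕜 z + d‖ :=
    norm_mul_sub_lt_norm_neg_mul_add hdet
      (fun _ ↦ norm_mul_add_le_of_norm_div_le_one hcd hφ) (by rwa [RCLike.norm_conj])
  have hquot : ‖(a * starRingEnd 𝕜 z - c) / (-b * starRingEnd 𝕜 z + d)‖ < 1 := by
    rwa [norm_div, div_lt_one ((norm_nonneg _).trans_lt hlt)]
  rw [← RCLike.norm_conj]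
  simpa only [map_div₀, map_sub, map_add, map_neg, map_mul, RCLike.conj_conj] using hquot

end RCLike

/-- If `φ(z) = (az+b)/(cz+d)` with `ad - bc = 1` maps the open unit disc
into itself, then `σ(z) = (conj a · z - conj c)/(-conj b · z + conj d)` also maps the open
unit disc into itself. -/
theorem stmt_12 (a b c d : ℂ) (h_det : a * d - b * c = 1)
    (hφ : ∀ z : ℂ, ‖z‖ < 1 → ‖(a * z + b) / (c * z + d)‖ < 1) :
    ∀ z : ℂ, ‖z‖ < 1 →
      ‖((starRingEnd ℂ) a * z - (starRingEnd ℂ) c) /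
          (-(starRingEnd ℂ) b * z + (starRingEnd ℂ) d)‖ < 1 := by
  intro z hz
  exact stmt_12_general (h_det ▸ one_ne_zero) (fun w hw ↦ (hφ w hw).le) hz
end

section
/- Let ψ ∈ L^∞(𝕋) be the function ψ(z) = z + conj(z) (so ψ̂(1) = ψ̂(−1) = 1 and all other Fourier coefficients vanish), and let φ(z) = iz. Then the Toeplitz composition operator T_ψC_φ on H² is complex symmetric with respect to the conjugation C_{ξ,π/2} for every ξ ∈ ℝ. -/
open Complex MeasureTheory
open scoped ComplexInnerProductSpace

/-!
If a conjugation `C` is diagonal in an orthonormal basis, `C e_j = d_j e_j`, then antiunitarity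
turns `T = C T* C` into the condition `⟪e_i, T e_j⟫ d_j = d_i ⟪e_j, T e_i⟫` on matrix entries.
For the Toeplitz composition operator with rotation `φ(z) = αz` the entries are `a (i - j) α ^ j`,
and for `C_{ξ,θ}` the eigenvalues are `d_j = c β ^ j` with `αβ = 1`; the two sides are then
`c a (i - j)` and `c a (j - i)`, which agree because the even symbol has an even sequence `a` of
Fourier coefficients.
-/

section AntilinearIsometry

open scoped InnerProductSpace

theorem norm_eq_one_of_linearIsometry_map_eq_smul {𝕜 E : Type*} [NormedField 𝕜]
    [NormedAddCommGroup E] [NormedSpace 𝕜 E] {σ : 𝕜 →+* 𝕜} {A : E →ₛₗᵢ[σ] E} {u : E} {c : 𝕜}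
    (hu : u ≠ 0) (hAu : A u = c • u) : ‖c‖ = 1 := by
  have hnorm : ‖c‖ * ‖u‖ = ‖u‖ := by rw [← norm_smul, ← hAu, A.norm_map]
  exact (mul_eq_right₀ (norm_ne_zero_iff.mpr hu)).mp hnorm

variable {𝕜 : Type*} [RCLike 𝕜]

theorem inner_antilinearIsometry_map_map {E F : Type*} [SeminormedAddCommGroup E]
    [InnerProductSpace 𝕜 E] [SeminormedAddCommGroup F] [InnerProductSpace 𝕜 F]
    (C : E →ₗᵢ⋆[𝕜] F) (x y : E) :
    ⟪C x, C y⟫_𝕜 = ⟪y, x⟫_𝕜 := by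
  have hI : (RCLike.I : 𝕜) • C y = -C ((RCLike.I : 𝕜) • y) := by
    rw [C.map_smulₛₗ, RCLike.conj_I, neg_smul, neg_neg]
  -- Moving `I` through `C` flips its sign, which conjugates the polarization identity.
  rw [← inner_conj_symm y x, inner_eq_sum_norm_sq_div_four (C x) (C y),
    inner_eq_sum_norm_sq_div_four x y]
  simp only [hI, sub_neg_eq_add, ← sub_eq_add_neg, ← map_add, ← map_sub, C.norm_map]
  simp only [map_div₀, map_add, map_sub, map_mul, map_pow, RCLike.conj_I, map_ofNat,
    RCLike.conj_ofReal]
  ring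

theorem inner_antilinearIsometry_map_of_map_eq_smul {E : Type*} [NormedAddCommGroup E]
    [InnerProductSpace 𝕜 E] {C : E →ₗᵢ⋆[𝕜] E} {u : E} {c : 𝕜} (hCu : C u = c • u) (x : E) :
    ⟪u, C x⟫_𝕜 = c * ⟪x, u⟫_𝕜 := by
  rcases eq_or_ne u 0 with rfl | hu
  · simp only [inner_zero_left, inner_zero_right, mul_zero]
  have hc : c * starRingEnd 𝕜 c = 1 := by
    rw [RCLike.mul_conj, norm_eq_one_of_linearIsometry_map_eq_smul hu hCu, RCLike.ofReal_one,
      one_pow]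
  rw [← inner_antilinearIsometry_map_map C u x, hCu, inner_smul_left, ← mul_assoc, hc, one_mul]

end AntilinearIsometry

section ComplexSymmetric

open scoped InnerProductSpace

variable {𝕜 ι : Type*} [RCLike 𝕜]

theorem continuousLinearMap_eq_iff_inner_hilbertBasis {κ E F : Type*} [NormedAddCommGroup E]
    [InnerProductSpace 𝕜 E] [NormedAddCommGroup F] [InnerProductSpace 𝕜 F]
    (e : HilbertBasis ι 𝕜 E) (f : HilbertBasis κ 𝕜 F) {A B : E →L[𝕜] F} :
    A = B ↔ ∀ i j, ⟪f i, A (e j)⟫_𝕜 = ⟪f i, B (e j)⟫_𝕜 := by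
  refine ⟨fun h i j => by rw [h], fun h => ?_⟩
  refine ContinuousLinearMap.ext_on
    (Submodule.dense_iff_topologicalClosure_eq_top.mpr e.dense_span) ?_
  rintro _ ⟨j, rfl⟩
  refine f.repr.injective (lp.ext (funext fun i => ?_))
  rw [f.repr_apply_apply, f.repr_apply_apply, h]

variable {H : Type*} [NormedAddCommGroup H] [InnerProductSpace 𝕜 H] [CompleteSpace H]

/-- Complex symmetry `T = C T* C` of a bounded operator `T` with respect to `C`. The conjugation
`C` is encoded as an antilinear isometry; that it is an involution is not part of the type. -/
def IsComplexSymmetric (C : H →ₗᵢ⋆[𝕜] H) (T : H →L[𝕜] H) : Prop :=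
  ∀ x, T x = C (ContinuousLinearMap.adjoint T (C x))

theorem isComplexSymmetric_iff_inner_of_map_eq_smul (e : HilbertBasis ι 𝕜 H) {C : H →ₗᵢ⋆[𝕜] H}
    {d : ι → 𝕜} (hC : ∀ i, C (e i) = d i • e i) (T : H →L[𝕜] H) :
    IsComplexSymmetric C T ↔ ∀ i j, ⟪e i, T (e j)⟫_𝕜 * d j = d i * ⟪e j, T (e i)⟫_𝕜 := by
  let K : H →L⋆[𝕜] H := C.toContinuousLinearMap
  let S : H →L[𝕜] H := K.comp ((ContinuousLinearMap.adjoint T).comp K)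
  have hS : ∀ i j, ⟪e i, S (e j)⟫_𝕜 = d i * (starRingEnd 𝕜 (d j) * ⟪e j, T (e i)⟫_𝕜) := by
    intro i j
    change ⟪e i, C (ContinuousLinearMap.adjoint T (C (e j)))⟫_𝕜 = _
    rw [inner_antilinearIsometry_map_of_map_eq_smul (hC i),
      ContinuousLinearMap.adjoint_inner_left, hC, inner_smul_left]
  have hd : ∀ j, starRingEnd 𝕜 (d j) * d j = 1 := by
    intro j
    rw [RCLike.conj_mul, norm_eq_one_of_linearIsometry_map_eq_smul
      (e.orthonormal.ne_zero j) (hC j), RCLike.ofReal_one, one_pow]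
  have hsymm : IsComplexSymmetric C T ↔ T = S :=
    (ContinuousLinearMap.ext_iff (f := T) (g := S)).symm
  rw [hsymm, continuousLinearMap_eq_iff_inner_hilbertBasis e e]
  refine forall₂_congr fun i j => ?_
  have hdj : d j ≠ 0 := right_ne_zero_of_mul_eq_one (hd j)
  have hcancel : d i * (starRingEnd 𝕜 (d j) * ⟪e j, T (e i)⟫_𝕜) * d j =
      d i * ⟪e j, T (e i)⟫_𝕜 := by
    linear_combination d i * ⟪e j, T (e i)⟫_𝕜 * hd j
  rw [hS, ← mul_left_inj' hdj, hcancel]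

/-- Complex symmetry of `T_ψ C_φ` for `φ(z) = αz`, where `e k` stands for `z^k`, `a` for the
Fourier coefficients of `ψ`, and `C` for `C_{ξ,θ}` with `c = e^{iξ}`, `β = e^{-iθ}`. -/
theorem stmt_15_general (e : HilbertBasis ℕ 𝕜 H) {a : ℤ → 𝕜} (ha : Function.Even a)
    {α β c : 𝕜} (hαβ : α * β = 1) {T : H →L[𝕜] H}
    (hT : ∀ k p : ℕ, ⟪e p, T (e k)⟫_𝕜 = a ((p : ℤ) - k) * α ^ k)
    {C : H →ₗᵢ⋆[𝕜] H} (hC : ∀ k, C (e k) = (c * β ^ k) • e k) :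
    IsComplexSymmetric C T := by
  refine (isComplexSymmetric_iff_inner_of_map_eq_smul e hC T).mpr fun p k => ?_
  have hpow (n : ℕ) : α ^ n * β ^ n = 1 := by rw [← mul_pow, hαβ, one_pow]
  calc ⟪e p, T (e k)⟫_𝕜 * (c * β ^ k)
      = c * a ((p : ℤ) - k) * (α ^ k * β ^ k) := by rw [hT]; ring
    _ = c * a ((k : ℤ) - p) * (α ^ p * β ^ p) := by
      rw [hpow, hpow, ← ha.eq ((k : ℤ) - p), neg_sub]
    _ = c * β ^ p * ⟪e k, T (e p)⟫_𝕜 := by rw [hT]; ring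

end ComplexSymmetric

section Fourier

variable {t : ℝ}

theorem even_fourierCoeff [Fact (0 < t)] {E : Type*} [NormedAddCommGroup E] [NormedSpace ℂ E]
    {ψ : AddCircle t → E} (hψ : Function.Even ψ) : Function.Even (fourierCoeff ψ) := by
  intro n
  unfold fourierCoeff
  rw [← integral_neg_eq_self]
  refine integral_congr_ae (Filter.Eventually.of_forall fun x => ?_)
  simp only [hψ.eq, fourier_apply, smul_neg, neg_smul, neg_neg]

theorem even_fourier_add_conj_fourier (n : ℤ) :
    Function.Even fun x : AddCircle t => fourier n x + starRingEnd ℂ (fourier n x) := by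
  intro x
  have hneg : fourier n (-x) = starRingEnd ℂ (fourier n x) := by
    rw [← fourier_neg, fourier_apply, fourier_apply, smul_neg, neg_smul]
  simp only [hneg, Complex.conj_conj, add_comm]

end Fourier

theorem I_mul_exp_neg_pi_div_two_mul_I : I * exp (-(Real.pi / 2) * I) = 1 := by
  rw [neg_mul, exp_neg, exp_pi_div_two_mul_I, mul_inv_cancel₀ I_ne_zero]

/-- Let `ψ(z) = z + conj z` on the unit circle (so `ψ̂(1) = ψ̂(-1) = 1`
and all other Fourier coefficients vanish) and let `φ(z) = iz`.  The Hardy space `H²` is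
modelled as a Hilbert space `H` with Hilbert basis `e k ↔ z^k`, and `T = T_ψ C_φ` is
characterized by its matrix entries `⟪z^p, T z^k⟫ = ψ̂(p-k) iᵏ`.  Then for every `ξ ∈ ℝ`,
`T` is complex symmetric (`T = C T* C`) with respect to the conjugation `C_{ξ,π/2}`,
i.e. the antilinear isometry `C` with `C(z^k) = e^{iξ} e^{-ikπ/2} z^k`. -/
theorem stmt_15 [Fact (0 < 2 * Real.pi)]
    (ψ : AddCircle (2 * Real.pi) → ℂ)
    (hψ : ψ = fun x => fourier 1 x + (starRingEnd ℂ) (fourier 1 x))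
    (H : Type) [NormedAddCommGroup H] [InnerProductSpace ℂ H] [CompleteSpace H]
    (e : HilbertBasis ℕ ℂ H)
    (T : H →L[ℂ] H)
    (hT : ∀ k p : ℕ, ⟪(e p : H), T (e k)⟫ =
      fourierCoeff ψ ((p : ℤ) - k) * Complex.I ^ k) :
    ∀ (ξ : ℝ) (C : H → H),
      (∀ x y : H, C (x + y) = C x + C y) →
      (∀ (α : ℂ) (x : H), C (α • x) = (starRingEnd ℂ) α • C x) →
      (∀ x : H, ‖C x‖ = ‖x‖) →
      (∀ k : ℕ, C (e k) =
        (Complex.exp (ξ * Complex.I) *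
          Complex.exp (-(Real.pi / 2) * Complex.I) ^ k) • (e k : H)) →
      ∀ f : H, T f = C (ContinuousLinearMap.adjoint T (C f)) := by
  intro ξ C hadd hsmul hnorm hC
  have hψ_even : Function.Even ψ := hψ ▸ even_fourier_add_conj_fourier 1
  let K : H →ₗᵢ⋆[ℂ] H := ⟨⟨⟨C, hadd⟩, hsmul⟩, hnorm⟩
  exact stmt_15_general (C := K) e (even_fourierCoeff hψ_even) I_mul_exp_neg_pi_div_two_mul_I hT hC
end

section
/- Let ψ ∈ L^∞(𝕋) be the function ψ(z) = z + conj(z) and let φ(z) = iz. Then the Toeplitz composition operator T = T_ψC_φ on H² satisfies (T T*)(z) = z³ + 2z and (T* T)(z) = −z³ + 2z (as functions of z ∈ 𝔻); in particular, T is not a normal operator, even though Σ_{n=0}^{∞} { |ψ̂(n)|² − Σ_{m=0}^{∞} ( C(m+n, m) · |ψ̂(−n)| · |a|ⁿ · |b|^m )² } = 0 holds for the coefficients a = i, b = 0 of φ. -/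
open Complex MeasureTheory
open scoped ComplexInnerProductSpace

/-! Write `T = T_ψ C_φ` with `ψ(z) = z + conj z` and `φ(z) = az`. Then `T` multiplies `zᵏ` by `aᵏ`
and moves it to its two neighbours, while `T*` first moves to the neighbours and then multiplies the
component at `zʲ` by `conj aʲ`. Hence for `|a| = 1` the phases cancel in `T T* = T_ψ²`, whereas
`T* T` conjugates `T_ψ²` by a rotation, which turns the coefficient `1` of `z³` in `T_ψ² z` into
`a (conj a)³ = (conj a)²`. The two agree only if `a² = 1`. The sum in the theorem does not see
these phases: for `b = 0` only the terms `m = 0` survive, and they equal `|ψ̂(-n)|² = |ψ̂(n)|²`. -/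

open scoped ComplexConjugate

theorem fourierCoeff_fourier_add_conj {L : ℝ} [Fact (0 < L)] (n : ℤ) :
    fourierCoeff (fun x : AddCircle L => fourier n x + conj (fourier n x)) =
      Pi.single n 1 + Pi.single (-n) 1 := by
  have integrable_fourier (m : ℤ) :
      Integrable (fourier m : AddCircle L → ℂ) AddCircle.haarAddCircle :=
    (map_continuous (fourier m)).integrable_of_hasCompactSupport (.of_compactSpace _)
  simp only [← fourier_neg]
  rw [← fourierCoeff_fourier (T := L) n, ← fourierCoeff_fourier (T := L) (-n),
    ← fourierCoeff.add (integrable_fourier n) (integrable_fourier (-n))]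
  rfl

section Operator

variable {𝕜 E : Type*} [RCLike 𝕜] [NormedAddCommGroup E] [InnerProductSpace 𝕜 E]

theorem eq_of_forall_inner_hilbertBasis_eq {ι : Type*} (b : HilbertBasis ι 𝕜 E) {x y : E}
    (h : ∀ i, inner 𝕜 (b i) x = inner 𝕜 (b i) y) : x = y :=
  b.repr.injective <| lp.ext <| funext fun i => by
    simpa only [b.repr_apply_apply] using h i

/-- `T` is the Toeplitz composition operator `f ↦ P(ψ · (f ∘ φ))` on the Hardy space, where `ψ` has
Fourier coefficients `c` and `φ(z) = az`. The Hilbert basis `e` stands for the monomials `zᵏ`, and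
`T` is described by its matrix `⟪zᵖ, T zᵏ⟫ = c(p - k) aᵏ`. -/
def IsToeplitzComposition (e : HilbertBasis ℕ 𝕜 E) (c : ℤ → 𝕜) (a : 𝕜) (T : E →L[𝕜] E) : Prop :=
  ∀ k p : ℕ, inner 𝕜 (e p) (T (e k)) = c (p - k) * a ^ k

namespace IsToeplitzComposition

open ContinuousLinearMap (adjoint)

variable {e : HilbertBasis ℕ 𝕜 E} {a : 𝕜} {T : E →L[𝕜] E}

theorem inner_adjoint [CompleteSpace E] {c : ℤ → 𝕜} (hT : IsToeplitzComposition e c a T)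
    (k p : ℕ) :
    inner 𝕜 (e k) (adjoint T (e p)) = conj (c (p - k)) * conj a ^ k := by
  rw [ContinuousLinearMap.adjoint_inner_right, ← inner_conj_symm, hT, map_mul, map_pow]

theorem apply_zero (hT : IsToeplitzComposition e (Pi.single 1 1 + Pi.single (-1) 1) a T) :
    T (e 0) = e 1 :=
  eq_of_forall_inner_hilbertBasis_eq e fun p => by
    rw [hT, orthonormal_iff_ite.mp e.orthonormal]
    simp only [Pi.add_apply, Pi.single_apply]
    grind

theorem apply_succ (hT : IsToeplitzComposition e (Pi.single 1 1 + Pi.single (-1) 1) a T) (k : ℕ) :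
    T (e (k + 1)) = a ^ (k + 1) • (e k + e (k + 2)) :=
  eq_of_forall_inner_hilbertBasis_eq e fun p => by
    rw [hT, inner_smul_right, inner_add_right, mul_comm]
    simp only [orthonormal_iff_ite.mp e.orthonormal, Pi.add_apply, Pi.single_apply]
    grind

variable [CompleteSpace E]

theorem adjoint_apply_zero
    (hT : IsToeplitzComposition e (Pi.single 1 1 + Pi.single (-1) 1) a T) :
    adjoint T (e 0) = conj a • e 1 :=
  eq_of_forall_inner_hilbertBasis_eq e fun k => by
    rw [hT.inner_adjoint, inner_smul_right, orthonormal_iff_ite.mp e.orthonormal]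
    simp only [Pi.add_apply, Pi.single_apply, map_add, apply_ite conj, map_one, map_zero]
    obtain rfl | hk := eq_or_ne k 1
    · simp
    · grind

theorem adjoint_apply_succ
    (hT : IsToeplitzComposition e (Pi.single 1 1 + Pi.single (-1) 1) a T) (p : ℕ) :
    adjoint T (e (p + 1)) = conj a ^ p • e p + conj a ^ (p + 2) • e (p + 2) :=
  eq_of_forall_inner_hilbertBasis_eq e fun k => by
    rw [hT.inner_adjoint, inner_add_right, inner_smul_right, inner_smul_right]
    simp only [orthonormal_iff_ite.mp e.orthonormal, Pi.add_apply, Pi.single_apply, map_add,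
      apply_ite conj, map_one, map_zero]
    grind

theorem apply_adjoint_apply_one
    (hT : IsToeplitzComposition e (Pi.single 1 1 + Pi.single (-1) 1) a T) :
    T (adjoint T (e 1)) = (‖a‖ ^ 4 : 𝕜) • e 3 + (1 + ‖a‖ ^ 4 : 𝕜) • e 1 :=
  calc
    T (adjoint T (e 1)) = T (e 0 + conj a ^ 2 • e 2) := by
      simp only [hT.adjoint_apply_succ 0, pow_zero, one_smul, zero_add]
    _ = e 1 + (conj a * a) ^ 2 • (e 1 + e 3) := by
      rw [map_add, map_smul, hT.apply_zero, hT.apply_succ 1, smul_smul, mul_pow]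
    _ = (‖a‖ ^ 4 : 𝕜) • e 3 + (1 + ‖a‖ ^ 4 : 𝕜) • e 1 := by
      rw [RCLike.conj_mul]
      module

theorem adjoint_apply_apply_one
    (hT : IsToeplitzComposition e (Pi.single 1 1 + Pi.single (-1) 1) a T) :
    adjoint T (T (e 1)) = (‖a‖ ^ 2 * conj a ^ 2 : 𝕜) • e 3 + (2 * ‖a‖ ^ 2 : 𝕜) • e 1 :=
  calc
    adjoint T (T (e 1)) = a • adjoint T (e 0 + e 2) := by
      rw [hT.apply_succ 0, map_smul, zero_add, pow_one]
    _ = a • (conj a • e 1 + (conj a • e 1 + conj a ^ 3 • e 3)) := by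
      rw [map_add, hT.adjoint_apply_zero, hT.adjoint_apply_succ 1, pow_one]
    _ = (conj a * a * conj a ^ 2) • e 3 + (2 * (conj a * a)) • e 1 := by
      module
    _ = (‖a‖ ^ 2 * conj a ^ 2 : 𝕜) • e 3 + (2 * ‖a‖ ^ 2 : 𝕜) • e 1 := by
      rw [RCLike.conj_mul]

theorem sq_eq_one_of_adjoint_comp_comm
    (hT : IsToeplitzComposition e (Pi.single 1 1 + Pi.single (-1) 1) a T)
    (hcomm : adjoint T ∘L T = T ∘L adjoint T) : a ^ 2 = 1 := by
  have key := DFunLike.congr_fun hcomm (e 1)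
  rw [ContinuousLinearMap.comp_apply, ContinuousLinearMap.comp_apply,
    hT.apply_adjoint_apply_one, hT.adjoint_apply_apply_one] at key
  have coeff_one : (2 * ‖a‖ ^ 2 : 𝕜) = 1 + ‖a‖ ^ 4 := by
    simpa [inner_add_right, inner_smul_right, orthonormal_iff_ite.mp e.orthonormal,
      e.orthonormal.ne_zero] using
      congrArg (inner 𝕜 (e 1)) key
  have coeff_three : (‖a‖ ^ 2 * conj a ^ 2 : 𝕜) = ‖a‖ ^ 4 := by
    simpa [inner_add_right, inner_smul_right, orthonormal_iff_ite.mp e.orthonormal,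
      e.orthonormal.ne_zero] using
      congrArg (inner 𝕜 (e 3)) key
  have norm_sq : (‖a‖ ^ 2 : 𝕜) = 1 := by
    have : ((‖a‖ : 𝕜) ^ 2 - 1) ^ 2 = 0 := by linear_combination -coeff_one
    exact sub_eq_zero.mp (pow_eq_zero_iff two_ne_zero |>.mp this)
  have conj_sq : conj (a ^ 2) = conj 1 := by
    rw [map_pow, map_one]
    linear_combination coeff_three + (‖a‖ ^ 2 + 1 - conj a ^ 2) * norm_sq
  exact (starRingEnd 𝕜).injective conj_sq

end IsToeplitzComposition

end Operator

theorem tsum_norm_sq_sub_tsum_choose_eq_zero {𝕜 : Type*} [RCLike 𝕜] {c : ℤ → 𝕜}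
    (hc : ∀ n, ‖c (-n)‖ = ‖c n‖) {a : 𝕜} (ha : ‖a‖ = 1) :
    ∑' n : ℕ, (‖c n‖ ^ 2 -
      ∑' m : ℕ, ((Nat.choose (m + n) m : ℝ) * ‖c (-n)‖ * ‖a‖ ^ n * ‖(0 : 𝕜)‖ ^ m) ^ 2) = 0 := by
  refine (tsum_congr fun n => ?_).trans tsum_zero
  rw [tsum_eq_single 0 fun m hm => by simp [hm]]
  simp [hc, ha]

theorem stmt_16_general {L : ℝ} [Fact (0 < L)] {ψ : AddCircle L → ℂ}
    (hψ : ψ = fun x => fourier 1 x + conj (fourier 1 x))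
    {H : Type*} [NormedAddCommGroup H] [InnerProductSpace ℂ H] [CompleteSpace H]
    {e : HilbertBasis ℕ ℂ H} {T : H →L[ℂ] H} {a : ℂ} (ha : ‖a‖ = 1) (ha_sq : a ^ 2 ≠ 1)
    (hT : IsToeplitzComposition e (fourierCoeff ψ) a T) :
    T (ContinuousLinearMap.adjoint T (e 1)) = e 3 + (2 : ℂ) • e 1 ∧
    ContinuousLinearMap.adjoint T (T (e 1)) = conj a ^ 2 • e 3 + (2 : ℂ) • e 1 ∧
    ¬ (ContinuousLinearMap.adjoint T ∘L T = T ∘L ContinuousLinearMap.adjoint T) ∧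
    ∑' n : ℕ, (‖fourierCoeff ψ n‖ ^ 2 -
      ∑' m : ℕ, ((Nat.choose (m + n) m : ℝ) * ‖fourierCoeff ψ (-n)‖ *
        ‖a‖ ^ n * ‖(0 : ℂ)‖ ^ m) ^ 2) = 0 := by
  have hcoeff : fourierCoeff ψ = Pi.single 1 1 + Pi.single (-1) 1 :=
    hψ ▸ fourierCoeff_fourier_add_conj 1
  have heven (n : ℤ) : fourierCoeff ψ (-n) = fourierCoeff ψ n := by
    simp only [hcoeff, Pi.add_apply, Pi.single_apply]
    grind
  rw [hcoeff] at hT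
  refine ⟨?_, ?_, fun hcomm => ha_sq (hT.sq_eq_one_of_adjoint_comp_comm hcomm),
    tsum_norm_sq_sub_tsum_choose_eq_zero (fun n => by rw [heven]) ha⟩
  · simpa [ha, one_add_one_eq_two] using hT.apply_adjoint_apply_one
  · simpa [ha] using hT.adjoint_apply_apply_one

/-- Let `ψ(z) = z + conj z` on the unit circle (so `ψ̂(1) = ψ̂(-1) = 1`
and all other Fourier coefficients vanish) and let `φ(z) = iz = az + b` with `a = i`,
`b = 0`.  The Hardy space `H²` is modelled as a Hilbert space `H` with Hilbert basis
`e k ↔ z^k`, and `T = T_ψ C_φ` is characterized by its matrix entries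
`⟪z^p, T z^k⟫ = ψ̂(p-k) iᵏ`.  Then `(T T*)(z) = z³ + 2z` and `(T* T)(z) = -z³ + 2z`;
in particular `T` is not normal, even though
`∑_{n≥0} ( |ψ̂(n)|² - ∑_{m≥0} ( C(m+n,m) |ψ̂(-n)| |a|ⁿ |b|^m )² ) = 0`. -/
theorem stmt_16 [Fact (0 < 2 * Real.pi)]
    (ψ : AddCircle (2 * Real.pi) → ℂ)
    (hψ : ψ = fun x => fourier 1 x + (starRingEnd ℂ) (fourier 1 x))
    (H : Type) [NormedAddCommGroup H] [InnerProductSpace ℂ H] [CompleteSpace H]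
    (e : HilbertBasis ℕ ℂ H)
    (T : H →L[ℂ] H)
    (hT : ∀ k p : ℕ, ⟪(e p : H), T (e k)⟫ =
      fourierCoeff ψ ((p : ℤ) - k) * Complex.I ^ k) :
    T (ContinuousLinearMap.adjoint T (e 1)) = (e 3 : H) + (2 : ℂ) • (e 1 : H) ∧
    ContinuousLinearMap.adjoint T (T (e 1)) = -(e 3 : H) + (2 : ℂ) • (e 1 : H) ∧
    ¬ (ContinuousLinearMap.adjoint T ∘L T = T ∘L ContinuousLinearMap.adjoint T) ∧
    (∑' n : ℕ, (‖fourierCoeff ψ (n : ℤ)‖ ^ 2 -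
      ∑' m : ℕ, ((Nat.choose (m + n) m : ℝ) * ‖fourierCoeff ψ (-(n : ℤ))‖ *
        ‖Complex.I‖ ^ n * ‖(0 : ℂ)‖ ^ m) ^ 2)) = 0 := by
  have I_sq_ne_one : I ^ 2 ≠ 1 := by norm_num [I_sq]
  simpa using stmt_16_general hψ norm_I I_sq_ne_one hT
end
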